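/- Let (ξ_i)_{i∈ℕ} be a sequence of identically distributed real random variables on (Ω, 𝓕, ℙ) with 𝔼[|ξ_1|] < ∞. Suppose (ξ_i) is α-mixing with mixing coefficients (α(n))_{n≥1}, extended by α(t) := α(⌊t⌋) for t ≥ 1 and α(t) := 1/4 for t ∈ [0,1). Let G be the distribution function of |ξ_1| and Ḡ := 1 − G. If ∫_0^1 log(1 + α^→(y/2)) · Ḡ^→(y) dy < ∞, then (1/n)·Σ_{i=1}^n (ξ_i − 𝔼[ξ_i]) → 0 ℙ-almost surely as n → ∞. -/

import Mathlib

open MeasureTheory Filter Set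

/-- Distribution function of a random variable. -/
noncomputable def distFun {Ω : Type*} [MeasurableSpace Ω] (P : Measure Ω) (Y : Ω → ℝ) (x : ℝ) : ℝ :=
  (P {ω | Y ω ≤ x}).toReal

/-- α-mixing coefficients of a sequence of real random variables. -/
noncomputable def alphaCoef {Ω : Type*} [MeasurableSpace Ω] (P : Measure Ω)
    (X : ℕ → Ω → ℝ) (n : ℕ) : ℝ :=
  sSup { c : ℝ | ∃ (k : ℕ) (A B : Set Ω),
    MeasurableSet[⨆ i ∈ {i : ℕ | i ≤ k}, MeasurableSpace.comap (X i) Real.measurableSpace] A ∧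
    MeasurableSet[⨆ i ∈ {i : ℕ | k + n ≤ i}, MeasurableSpace.comap (X i) Real.measurableSpace] B ∧
    c = |(P (A ∩ B)).toReal - (P A).toReal * (P B).toReal| }

/-- Càdlàg extension of mixing coefficients, equal to `1/4` on `[0,1)`
and to `α ⌊t⌋` for `t ≥ 1`. -/
noncomputable def alphaExt (α : ℕ → ℝ) (t : ℝ) : ℝ :=
  if t < 1 then 1 / 4 else α ⌊t⌋₊

/-- Right-continuous inverse of a nonincreasing function on `[0,∞)`, with `sup ∅ = 0`. -/
noncomputable def rcInv (h : ℝ → ℝ) (y : ℝ) : ℝ :=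
  sSup { x : ℝ | 0 ≤ x ∧ y < h x }

/-- The σ-algebra of the past of `i`, with a gap `p`. -/
@[reducible] def pastSigma {Ω : Type*} (ξ : ℕ → Ω → ℝ) (i p : ℕ) : MeasurableSpace Ω :=
  ⨆ j ∈ {j : ℕ | j + p ≤ i}, MeasurableSpace.comap (ξ j) Real.measurableSpace

lemma pastSigma_le {Ω : Type*} [m0 : MeasurableSpace Ω] {ξ : ℕ → Ω → ℝ}
    (hmeas : ∀ i, Measurable (ξ i)) (i p : ℕ) : pastSigma ξ i p ≤ m0 := by
  unfold pastSigma
  exact iSup₂_le fun j _ => (hmeas j).comap_le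

lemma pastSigma_mono {Ω : Type*} {ξ : ℕ → Ω → ℝ} {i l : ℕ} (p : ℕ) (h : i ≤ l) :
    pastSigma ξ i p ≤ pastSigma ξ l p := by
  unfold pastSigma
  refine iSup₂_le fun j hj => ?_
  exact le_iSup₂_of_le (f := fun (j : ℕ) (_ : j ∈ {j : ℕ | j + p ≤ l}) =>
    MeasurableSpace.comap (ξ j) Real.measurableSpace) j
    (by simp only [Set.mem_ofPred_eq] at hj ⊢; omega) le_rfl

lemma comap_le_pastSigma {Ω : Type*} {ξ : ℕ → Ω → ℝ} {i l p : ℕ} (h : i + p ≤ l) :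
    MeasurableSpace.comap (ξ i) Real.measurableSpace ≤ pastSigma ξ l p := by
  unfold pastSigma
  exact le_iSup₂_of_le (f := fun (j : ℕ) (_ : j ∈ {j : ℕ | j + p ≤ l}) =>
    MeasurableSpace.comap (ξ j) Real.measurableSpace) i h le_rfl

lemma abs_cov_le_one {Ω : Type*} [MeasurableSpace Ω] (P : Measure Ω) [IsProbabilityMeasure P]
    (A B : Set Ω) : |(P (A ∩ B)).toReal - (P A).toReal * (P B).toReal| ≤ 1 := by
  have h1 : (P (A ∩ B)).toReal ≤ 1 := measureReal_le_one
  have h2 : (P A).toReal ≤ 1 := measureReal_le_one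
  have h3 : (P B).toReal ≤ 1 := measureReal_le_one
  have h4 : 0 ≤ (P (A ∩ B)).toReal := ENNReal.toReal_nonneg
  have h5 : 0 ≤ (P A).toReal := ENNReal.toReal_nonneg
  have h6 : 0 ≤ (P B).toReal := ENNReal.toReal_nonneg
  rw [abs_le]; constructor <;> nlinarith

lemma alphaCoef_bdd {Ω : Type*} [MeasurableSpace Ω] (P : Measure Ω) [IsProbabilityMeasure P]
    (X : ℕ → Ω → ℝ) (n : ℕ) : BddAbove { c : ℝ | ∃ (k : ℕ) (A B : Set Ω),
    MeasurableSet[⨆ i ∈ {i : ℕ | i ≤ k}, MeasurableSpace.comap (X i) Real.measurableSpace] A ∧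
    MeasurableSet[⨆ i ∈ {i : ℕ | k + n ≤ i}, MeasurableSpace.comap (X i) Real.measurableSpace] B ∧
    c = |(P (A ∩ B)).toReal - (P A).toReal * (P B).toReal| } := by
  refine ⟨1, ?_⟩
  rintro c ⟨k, A, B, -, -, rfl⟩
  exact abs_cov_le_one P A B

lemma alphaCoef_nonneg {Ω : Type*} [MeasurableSpace Ω] (P : Measure Ω) [IsProbabilityMeasure P]
    (X : ℕ → Ω → ℝ) (n : ℕ) : 0 ≤ alphaCoef P X n := by
  unfold alphaCoef
  apply Real.sSup_nonneg
  rintro c ⟨k, A, B, -, -, rfl⟩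
  exact abs_nonneg _

lemma alphaCoef_le_one {Ω : Type*} [MeasurableSpace Ω] (P : Measure Ω) [IsProbabilityMeasure P]
    (X : ℕ → Ω → ℝ) (n : ℕ) : alphaCoef P X n ≤ 1 := by
  unfold alphaCoef
  apply Real.sSup_le _ zero_le_one
  rintro c ⟨k, A, B, -, -, rfl⟩
  exact abs_cov_le_one P A B

lemma cov_set_le {Ω : Type*} [MeasurableSpace Ω] (P : Measure Ω) [IsProbabilityMeasure P]
    {ξ : ℕ → Ω → ℝ} {i p : ℕ} {A B : Set Ω} (hA : MeasurableSet[pastSigma ξ i p] A)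
    (hB : MeasurableSet[MeasurableSpace.comap (ξ i) Real.measurableSpace] B) :
    |P.real (A ∩ B) - P.real A * P.real B| ≤ alphaCoef P ξ p := by
  by_cases h : p ≤ i
  · refine le_csSup (alphaCoef_bdd P ξ p) ⟨i - p, A, B, ?_, ?_, rfl⟩
    · have : {j : ℕ | j + p ≤ i} = {j : ℕ | j ≤ i - p} := by ext j; simp; omega
      rw [← this]; exact hA
    · refine (le_iSup₂_of_le (f := fun (j : ℕ) (_ : j ∈ {j : ℕ | i - p + p ≤ j}) =>
        MeasurableSpace.comap (ξ j) Real.measurableSpace) i (by simp; omega) le_rfl) _ hB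
  · have h0 : pastSigma ξ i p = ⊥ := by
      unfold pastSigma
      have : {j : ℕ | j + p ≤ i} = ∅ := by ext j; simp; omega
      rw [this]; simp
    rw [h0, MeasurableSpace.measurableSet_bot_iff] at hA
    rcases hA with rfl | rfl
    · simpa using alphaCoef_nonneg P ξ p
    · simpa using alphaCoef_nonneg P ξ p

lemma cov_le {Ω : Type*} [MeasurableSpace Ω] (P : Measure Ω) [IsProbabilityMeasure P]
    {ξ : ℕ → Ω → ℝ} (hmeas : ∀ i, Measurable (ξ i)) {g : ℝ → ℝ} (hg : Measurable g) {b : ℝ}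
    (hg0 : ∀ x, 0 ≤ g x) (hgb : ∀ x, g x ≤ b) {i p : ℕ} {A : Set Ω}
    (hA : MeasurableSet[pastSigma ξ i p] A) :
    |∫ ω in A, g (ξ i ω) ∂P - P.real A * ∫ ω, g (ξ i ω) ∂P| ≤ b * alphaCoef P ξ p := by
  have hb : 0 ≤ b := (hg0 0).trans (hgb 0)
  have hA' : MeasurableSet A := pastSigma_le hmeas i p _ hA
  have hgi : Measurable fun ω => g (ξ i ω) := hg.comp (hmeas i)
  have hi : Integrable (fun ω => g (ξ i ω)) P :=
    Integrable.of_bound hgi.aestronglyMeasurable b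
      (ae_of_all _ fun ω => by rw [Real.norm_of_nonneg (hg0 _)]; exact hgb _)
  have hset : ∀ t, MeasurableSet {ω | t ≤ g (ξ i ω)} := fun t => measurableSet_le measurable_const hgi
  have e1 := hi.integral_eq_integral_Ioc_meas_le (ae_of_all _ fun ω => hg0 _)
    (ae_of_all _ fun ω => hgb _)
  have e2 := (hi.restrict (s := A)).integral_eq_integral_Ioc_meas_le (ae_of_all _ fun ω => hg0 _)
    (ae_of_all _ fun ω => hgb _)
  rw [e1, e2, ← integral_const_mul]
  have anti : ∀ (μ : Measure Ω) [IsFiniteMeasure μ],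
      Antitone fun t => μ.real {ω | t ≤ g (ξ i ω)} := by
    intro μ _ s t hst
    exact measureReal_mono (fun ω h => le_trans hst h)
  have ii : ∀ (μ : Measure Ω) [IsFiniteMeasure μ],
      IntegrableOn (fun t => μ.real {ω | t ≤ g (ξ i ω)}) (Set.Ioc 0 b) := by
    intro μ _
    exact ((anti μ).antitoneOn _).integrableOn_of_measure_ne_top (a := 0) (b := b) (s := Set.Icc 0 b)
      (isLeast_Icc hb) (isGreatest_Icc hb) (by simp) (by simp)
      |>.mono_set Set.Ioc_subset_Icc_self
  rw [← integral_sub (ii _) ((ii _).const_mul _)]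
  calc _ ≤ alphaCoef P ξ p * volume.real (Set.Ioc 0 b) := by
        rw [← Real.norm_eq_abs]
        apply norm_setIntegral_le_of_norm_le_const (by simp)
        intro t _
        rw [Real.norm_eq_abs, measureReal_restrict_apply (hset t), Set.inter_comm]
        apply cov_set_le P hA
        exact ⟨{x | t ≤ g x}, measurableSet_le measurable_const hg, rfl⟩
    _ = _ := by simp [hb]; ring

lemma condExp_dev_le {Ω : Type*} [MeasurableSpace Ω] (P : Measure Ω) [IsProbabilityMeasure P]
    {ξ : ℕ → Ω → ℝ} (hmeas : ∀ i, Measurable (ξ i)) {g : ℝ → ℝ} (hg : Measurable g) {b : ℝ}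
    (hg0 : ∀ x, 0 ≤ g x) (hgb : ∀ x, g x ≤ b) (i p : ℕ) :
    ∫ ω, |(P[fun ω => g (ξ i ω) | pastSigma ξ i p]) ω - ∫ ω, g (ξ i ω) ∂P| ∂P
      ≤ 2 * min (b * alphaCoef P ξ p) (∫ ω, g (ξ i ω) ∂P) := by
  have hm := pastSigma_le hmeas i p
  have hgi : Measurable fun ω => g (ξ i ω) := hg.comp (hmeas i)
  have hi : Integrable (fun ω => g (ξ i ω)) P :=
    Integrable.of_bound hgi.aestronglyMeasurable b
      (ae_of_all _ fun ω => by rw [Real.norm_of_nonneg (hg0 _)]; exact hgb _)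
  set e := ∫ ω, g (ξ i ω) ∂P with he
  set C := P[fun ω => g (ξ i ω) | pastSigma ξ i p] with hC
  have hCi : Integrable C P := integrable_condExp
  have hWi : Integrable (fun ω => C ω - e) P := hCi.sub (integrable_const _)
  have hWm : Measurable[pastSigma ξ i p] fun ω => C ω - e :=
    (stronglyMeasurable_condExp.measurable).sub_const e
  have hC0 : 0 ≤ᵐ[P] C := condExp_nonneg (ae_of_all _ fun ω => hg0 _)
  have he0 : 0 ≤ e := integral_nonneg fun ω => hg0 _
  rw [mul_min_of_nonneg _ _ zero_le_two]
  refine le_min ?_ ?_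
  · set A := {ω | 0 ≤ C ω - e} with hAdef
    have hA : MeasurableSet[pastSigma ξ i p] A := measurableSet_le measurable_const hWm
    have key : ∀ S, MeasurableSet[pastSigma ξ i p] S →
        |∫ ω in S, (C ω - e) ∂P| ≤ b * alphaCoef P ξ p := by
      intro S hS
      rw [integral_sub hCi.integrableOn (integrable_const _), hC, setIntegral_condExp hm hi hS]
      simpa using cov_le P hmeas hg hg0 hgb hS
    rw [← integral_add_compl (hm _ hA) hWi.abs]
    have h1 : ∫ ω in A, |C ω - e| ∂P = ∫ ω in A, (C ω - e) ∂P :=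
      setIntegral_congr_fun (hm _ hA) fun ω hω => abs_of_nonneg hω
    have h2 : ∫ ω in Aᶜ, |C ω - e| ∂P = - ∫ ω in Aᶜ, (C ω - e) ∂P := by
      rw [← integral_neg]
      refine setIntegral_congr_fun (hm _ hA).compl fun ω hω => abs_of_neg ?_
      simpa [A] using hω
    rw [h1, h2]
    have k1 := (abs_le.1 (key A hA)).2
    have k2 := (abs_le.1 (key Aᶜ hA.compl)).1
    linarith
  · calc ∫ ω, |C ω - e| ∂P ≤ ∫ ω, (C ω + e) ∂P := by
          refine integral_mono_ae hWi.abs (hCi.add (integrable_const _)) ?_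
          filter_upwards [hC0] with ω h
          have : 0 ≤ C ω := h
          simp only [abs_le]; constructor <;> linarith
      _ = 2 * e := by
          rw [integral_add hCi (integrable_const _), hC, integral_condExp hm]; simp; ring

/-- Martingale-type deviation. -/
noncomputable def devD {Ω : Type*} [MeasurableSpace Ω] (P : Measure Ω) (ξ : ℕ → Ω → ℝ) (g : ℝ → ℝ)
    (p i : ℕ) (ω : Ω) : ℝ :=
  g (ξ i ω) - (P[fun ω => g (ξ i ω) | pastSigma ξ i p]) ω

lemma devD_memLp {Ω : Type*} [MeasurableSpace Ω] (P : Measure Ω) [IsProbabilityMeasure P]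
    {ξ : ℕ → Ω → ℝ} (hmeas : ∀ i, Measurable (ξ i)) {g : ℝ → ℝ} (hg : Measurable g) {b : ℝ}
    (hg0 : ∀ x, 0 ≤ g x) (hgb : ∀ x, g x ≤ b) (p i : ℕ) :
    MemLp (devD P ξ g p i) 2 P := by
  have hgi : Measurable fun ω => g (ξ i ω) := hg.comp (hmeas i)
  have hi : MemLp (fun ω => g (ξ i ω)) 2 P :=
    MemLp.of_bound hgi.aestronglyMeasurable b
      (ae_of_all _ fun ω => by rw [Real.norm_of_nonneg (hg0 _)]; exact hgb _)
  exact hi.sub (hi.condExp (by norm_num))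

lemma devD_sq_le {Ω : Type*} [MeasurableSpace Ω] (P : Measure Ω) [IsProbabilityMeasure P]
    {ξ : ℕ → Ω → ℝ} (hmeas : ∀ i, Measurable (ξ i)) {g : ℝ → ℝ} (hg : Measurable g) {b : ℝ}
    (hg0 : ∀ x, 0 ≤ g x) (hgb : ∀ x, g x ≤ b) (p i : ℕ) :
    ∫ ω, devD P ξ g p i ω ^ 2 ∂P ≤ b * ∫ ω, g (ξ i ω) ∂P := by
  have hm := pastSigma_le hmeas i p
  have hgi : Measurable fun ω => g (ξ i ω) := hg.comp (hmeas i)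
  have hi : MemLp (fun ω => g (ξ i ω)) 2 P :=
    MemLp.of_bound hgi.aestronglyMeasurable b
      (ae_of_all _ fun ω => by rw [Real.norm_of_nonneg (hg0 _)]; exact hgb _)
  have h1 := ProbabilityTheory.integral_condVar_add_variance_condExp hm hi
  have h2 := ProbabilityTheory.variance_nonneg (P[fun ω => g (ξ i ω) | pastSigma ξ i p]) P
  have h3 := ProbabilityTheory.variance_le_expectation_sq (μ := P) hgi.aestronglyMeasurable
  unfold ProbabilityTheory.condVar at h1
  rw [integral_condExp hm] at h1
  have h4 : ∫ ω, devD P ξ g p i ω ^ 2 ∂P ≤ ∫ ω, (g (ξ i ω)) ^ 2 ∂P := by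
    have : ∫ ω, devD P ξ g p i ω ^ 2 ∂P = ∫ (x : Ω), (((fun ω ↦ g (ξ i ω)) -
      P[fun ω ↦ g (ξ i ω) | pastSigma ξ i p]) ^ 2) x ∂P := rfl
    rw [this]
    have h3' : ProbabilityTheory.variance (fun ω ↦ g (ξ i ω)) P ≤ ∫ ω, (g (ξ i ω)) ^ 2 ∂P := h3
    linarith
  refine h4.trans ?_
  rw [← integral_const_mul]
  refine integral_mono hi.integrable_sq ((hi.integrable (by norm_num)).const_mul b) fun ω => ?_
  have := hg0 (ξ i ω)
  have := hgb (ξ i ω)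
  simp only
  nlinarith

lemma devD_orth {Ω : Type*} [MeasurableSpace Ω] (P : Measure Ω) [IsProbabilityMeasure P]
    {ξ : ℕ → Ω → ℝ} (hmeas : ∀ i, Measurable (ξ i)) {g : ℝ → ℝ} (hg : Measurable g) {b : ℝ}
    (hg0 : ∀ x, 0 ≤ g x) (hgb : ∀ x, g x ≤ b) {p i l : ℕ} (hil : i + p ≤ l) :
    ∫ ω, devD P ξ g p i ω * devD P ξ g p l ω ∂P = 0 := by
  have hm := pastSigma_le hmeas l p
  have hDi := devD_memLp P hmeas hg hg0 hgb p i
  have hDl := devD_memLp P hmeas hg hg0 hgb p l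
  have hsm : StronglyMeasurable[pastSigma ξ l p] (devD P ξ g p i) := by
    refine StronglyMeasurable.sub ?_ ?_
    · have : Measurable[pastSigma ξ l p] (fun ω => g (ξ i ω)) := by
        have h0 : Measurable[MeasurableSpace.comap (ξ i) Real.measurableSpace] (ξ i) :=
          comap_measurable _
        exact (hg.comp h0).mono (comap_le_pastSigma hil) le_rfl
      exact this.stronglyMeasurable
    · exact stronglyMeasurable_condExp.mono (pastSigma_mono p (by omega))
  have hgl : Measurable fun ω => g (ξ l ω) := hg.comp (hmeas l)
  have hi : Integrable (fun ω => g (ξ l ω)) P :=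
    Integrable.of_bound hgl.aestronglyMeasurable b
      (ae_of_all _ fun ω => by rw [Real.norm_of_nonneg (hg0 _)]; exact hgb _)
  have hint : Integrable (devD P ξ g p i * devD P ξ g p l) P := hDi.integrable_mul hDl
  have h0 : P[devD P ξ g p l | pastSigma ξ l p] =ᵐ[P] 0 := by
    have e1 : P[devD P ξ g p l | pastSigma ξ l p] =ᵐ[P] _ :=
      condExp_sub hi (integrable_condExp (m := pastSigma ξ l p) (f := fun ω => g (ξ l ω)))
        (pastSigma ξ l p)
    refine e1.trans ?_
    have e2 : P[P[fun ω => g (ξ l ω) | pastSigma ξ l p] | pastSigma ξ l p]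
        = P[fun ω => g (ξ l ω) | pastSigma ξ l p] :=
      condExp_of_stronglyMeasurable hm stronglyMeasurable_condExp integrable_condExp
    rw [e2]; simp
  have h1 := condExp_mul_of_stronglyMeasurable_left hsm hint (hDl.integrable (by norm_num))
  calc ∫ ω, devD P ξ g p i ω * devD P ξ g p l ω ∂P
      = ∫ ω, (P[devD P ξ g p i * devD P ξ g p l | pastSigma ξ l p]) ω ∂P := by
        rw [integral_condExp hm]; rfl
    _ = ∫ ω, (0 : ℝ) ∂P := by
        apply integral_congr_ae
        filter_upwards [h1, h0] with ω a b
        rw [a]; simp [b]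
    _ = 0 := by simp

lemma devD_sum_sq_le {Ω : Type*} [MeasurableSpace Ω] (P : Measure Ω) [IsProbabilityMeasure P]
    {ξ : ℕ → Ω → ℝ} (hmeas : ∀ i, Measurable (ξ i)) {g : ℝ → ℝ} (hg : Measurable g) {b e : ℝ}
    (hg0 : ∀ x, 0 ≤ g x) (hgb : ∀ x, g x ≤ b) (he : ∀ i, ∫ ω, g (ξ i ω) ∂P = e) (p n : ℕ) :
    ∫ ω, (∑ i ∈ Finset.range n, devD P ξ g p i ω) ^ 2 ∂P ≤ n * (2 * p) * (b * e) := by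
  have hb : 0 ≤ b := (hg0 0).trans (hgb 0)
  have he0 : 0 ≤ e := by rw [← he 0]; exact integral_nonneg fun ω => hg0 _
  have hD := devD_memLp P hmeas hg hg0 hgb p
  have hij : ∀ i l, Integrable (fun ω => devD P ξ g p i ω * devD P ξ g p l ω) P :=
    fun i l => (hD i).integrable_mul (hD l)
  have hsq : ∀ i, ∫ ω, devD P ξ g p i ω ^ 2 ∂P ≤ b * e := fun i => by
    rw [← he i]; exact devD_sq_le P hmeas hg hg0 hgb p i
  have key : ∀ i l, ∫ ω, devD P ξ g p i ω * devD P ξ g p l ω ∂P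
      ≤ if l < i + p ∧ i < l + p then b * e else 0 := by
    intro i l
    split_ifs with h
    · calc _ ≤ ∫ ω, (devD P ξ g p i ω ^ 2 + devD P ξ g p l ω ^ 2) / 2 ∂P := by
            refine integral_mono (hij i l)
              (((hD i).integrable_sq.add (hD l).integrable_sq).div_const 2) fun ω => ?_
            simp only
            nlinarith [sq_nonneg (devD P ξ g p i ω - devD P ξ g p l ω)]
        _ ≤ b * e := by
            rw [integral_div, integral_add (hD i).integrable_sq (hD l).integrable_sq]
            linarith [hsq i, hsq l]
    · by_cases h1 : l < i + p
      · have h2 : l + p ≤ i := by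
          by_contra h3; exact h ⟨h1, by omega⟩
        rw [← devD_orth P hmeas hg hg0 hgb h2]
        simp_rw [mul_comm]; exact le_rfl
      · exact (devD_orth P hmeas hg hg0 hgb (by omega)).le
  calc ∫ ω, (∑ i ∈ Finset.range n, devD P ξ g p i ω) ^ 2 ∂P
      = ∑ i ∈ Finset.range n, ∑ l ∈ Finset.range n,
          ∫ ω, devD P ξ g p i ω * devD P ξ g p l ω ∂P := by
        simp_rw [sq, Finset.sum_mul_sum]
        rw [integral_finsetSum _ fun i _ => integrable_finsetSum _ fun l _ => hij i l]
        refine Finset.sum_congr rfl fun i _ => ?_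
        rw [integral_finsetSum _ fun l _ => hij i l]
    _ ≤ ∑ i ∈ Finset.range n, (2 * p) * (b * e) := by
        refine Finset.sum_le_sum fun i _ => ?_
        calc _ ≤ ∑ l ∈ Finset.range n, (if l < i + p ∧ i < l + p then b * e else 0) :=
              Finset.sum_le_sum fun l _ => key i l
          _ = ((Finset.range n).filter fun l => l < i + p ∧ i < l + p).card * (b * e) := by
              rw [← Finset.sum_filter]; simp
          _ ≤ _ := by
              refine mul_le_mul_of_nonneg_right ?_ (mul_nonneg hb he0)
              have : ((Finset.range n).filter fun l => l < i + p ∧ i < l + p)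
                  ⊆ Finset.Ico (i + 1 - p) (i + p) := by
                intro l; simp; omega
              have := Finset.card_le_card this
              rw [Nat.card_Ico] at this
              have h3 : ((Finset.range n).filter fun l => l < i + p ∧ i < l + p).card ≤ 2 * p := by
                omega
              exact_mod_cast h3
    _ = _ := by simp; ring

lemma tsum_geom_le {f : ℝ → ENNReal} (hf : Antitone f) {q ρ : ℝ} (hq : 0 < q) (hρ : 1 < ρ) :
    ∑' j : ℕ, ENNReal.ofReal (q * ρ ^ j) * f (q * ρ ^ j)
      ≤ ENNReal.ofReal (ρ / (ρ - 1)) * ∫⁻ s in Set.Ioi (0 : ℝ), f s := by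
  have hρ0 : 0 < ρ := by linarith
  have hρ1 : 0 < ρ - 1 := by linarith
  set I : ℕ → Set ℝ := fun j => Set.Ioc (q * ρ ^ j / ρ) (q * ρ ^ j) with hI
  have hdisj : Pairwise (Function.onFun Disjoint I) := by
    have key : ∀ i j, i < j → Disjoint (I i) (I j) := by
      intro i j hij
      rw [Set.disjoint_left]
      rintro x ⟨-, h1⟩ ⟨h2, -⟩
      have h3 : q * ρ ^ (i + 1) ≤ q * ρ ^ j :=
        mul_le_mul_of_nonneg_left (pow_le_pow_right₀ hρ.le hij) hq.le
      have h4 : q * ρ ^ i ≤ q * ρ ^ j / ρ := by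
        rw [le_div_iff₀ hρ0]; rw [pow_succ] at h3; linarith
      linarith
    intro i j hij
    rcases lt_or_gt_of_ne hij with h | h
    · exact key i j h
    · exact (key j i h).symm
  have hterm : ∀ j, ENNReal.ofReal (q * ρ ^ j) * f (q * ρ ^ j)
      ≤ ENNReal.ofReal (ρ / (ρ - 1)) * ∫⁻ s in I j, f s := by
    intro j
    set r := q * ρ ^ j with hr
    have hr0 : 0 < r := by positivity
    have h1 : f r * ENNReal.ofReal (r - r / ρ) ≤ ∫⁻ s in I j, f s := by
      calc f r * ENNReal.ofReal (r - r / ρ) = ∫⁻ s in I j, f r := by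
            rw [setLIntegral_const, hI, Real.volume_Ioc]
        _ ≤ _ := setLIntegral_mono' measurableSet_Ioc fun s hs => hf hs.2
    calc ENNReal.ofReal r * f r
        = ENNReal.ofReal (ρ / (ρ - 1)) * (f r * ENNReal.ofReal (r - r / ρ)) := by
          have : r = ρ / (ρ - 1) * (r - r / ρ) := by field_simp
          have e : ENNReal.ofReal r
              = ENNReal.ofReal (ρ / (ρ - 1)) * ENNReal.ofReal (r - r / ρ) := by
            rw [← ENNReal.ofReal_mul (by positivity), ← this]
          rw [e]
          ring
      _ ≤ _ := by gcongr
  calc _ ≤ ∑' j, ENNReal.ofReal (ρ / (ρ - 1)) * ∫⁻ s in I j, f s := ENNReal.tsum_le_tsum hterm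
    _ = ENNReal.ofReal (ρ / (ρ - 1)) * ∫⁻ s in ⋃ j, I j, f s := by
        rw [ENNReal.tsum_mul_left, lintegral_iUnion (fun j => measurableSet_Ioc) hdisj]
    _ ≤ _ := by
        gcongr
        refine Set.iUnion_subset fun j s hs => ?_
        exact lt_of_le_of_lt (by positivity) hs.1

lemma tail_antitone {Ω : Type*} [MeasurableSpace Ω] (P : Measure Ω) (Y : Ω → ℝ) :
    Antitone fun s : ℝ => P {ω | s < Y ω} := by
  intro s t hst
  exact measure_mono fun ω h => lt_of_le_of_lt hst h

lemma count_le {α : ℕ → ℝ} (hα : Tendsto α atTop (nhds 0)) {y : ℝ} (hy : 0 < y) :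
    ∑' k : ℕ, (if y < α (2 ^ k) then (1 : ENNReal) else 0)
      ≤ ENNReal.ofReal (2 / Real.log 2 * Real.log (1 + rcInv (alphaExt α) (y / 2))) := by
  have hl2 : 0 < Real.log 2 := Real.log_pos one_lt_two
  have hbdd : BddAbove { x : ℝ | 0 ≤ x ∧ y / 2 < alphaExt α x } := by
    obtain ⟨N, hN⟩ := eventually_atTop.1 (hα.eventually (gt_mem_nhds (half_pos hy)))
    refine ⟨N + 1, ?_⟩
    rintro x ⟨hx0, hx⟩
    by_contra hcon
    push Not at hcon
    have hx1 : ¬ x < 1 := by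
      have : (0 : ℝ) ≤ N := Nat.cast_nonneg N
      linarith
    rw [alphaExt, if_neg hx1] at hx
    have : N ≤ ⌊x⌋₊ := Nat.le_floor (by linarith)
    linarith [hN _ this]
  have hev : ∀ᶠ k : ℕ in atTop, α (2 ^ k) < y :=
    (hα.comp (tendsto_pow_atTop_atTop_of_one_lt (r := 2) one_lt_two)).eventually (gt_mem_nhds hy)
  obtain ⟨N, hN⟩ := eventually_atTop.1 hev
  have hfin : {k : ℕ | y < α (2 ^ k)}.Finite := by
    refine (Set.finite_Iio N).subset fun k hk => ?_
    by_contra h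
    simp only [Set.mem_Iio, not_lt] at h
    exact absurd (hN k h) (not_lt.2 (le_of_lt hk))
  by_cases hne : {k : ℕ | y < α (2 ^ k)}.Nonempty
  · obtain ⟨K, hK, hmax⟩ := hfin.exists_maximal hne
    have hK' : y < α (2 ^ K) := hK
    have hle : (2 : ℝ) ^ K ≤ rcInv (alphaExt α) (y / 2) := by
      refine le_csSup hbdd ⟨by positivity, ?_⟩
      have h1 : ¬ ((2 : ℝ) ^ K < 1) := not_lt.2 (one_le_pow₀ one_le_two)
      rw [alphaExt, if_neg h1]
      have : ⌊(2 : ℝ) ^ K⌋₊ = 2 ^ K := by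
        have := Nat.floor_natCast (R := ℝ) (2 ^ K)
        push_cast at this; exact this
      rw [this]; linarith
    have hlog : ((K : ℝ) + 1) ≤ 2 / Real.log 2 * Real.log (1 + rcInv (alphaExt α) (y / 2)) := by
      have h1 : Real.log (1 + 2 ^ K) ≤ Real.log (1 + rcInv (alphaExt α) (y / 2)) :=
        Real.log_le_log (by positivity) (by linarith)
      have h2 : ((K : ℝ) + 1) / 2 * Real.log 2 ≤ Real.log (1 + 2 ^ K) := by
        rcases Nat.eq_zero_or_pos K with rfl | hKp
        · norm_num; linarith
        · have h3 : Real.log (2 ^ K) ≤ Real.log (1 + 2 ^ K) :=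
            Real.log_le_log (by positivity) (by linarith)
          rw [Real.log_pow] at h3
          have h4 : (1 : ℝ) ≤ K := by exact_mod_cast hKp
          nlinarith
      rw [div_mul_eq_mul_div, le_div_iff₀ hl2]
      linarith
    calc ∑' k : ℕ, (if y < α (2 ^ k) then (1 : ENNReal) else 0)
        = ∑ k ∈ Finset.range (K + 1), (if y < α (2 ^ k) then (1 : ENNReal) else 0) := by
          refine tsum_eq_sum fun k hk => if_neg fun h => ?_
          have h2 : ¬ k ≤ K := by simp at hk; omega
          exact h2 (hmax (show k ∈ {k : ℕ | y < α (2 ^ k)} from h) (by omega))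
      _ ≤ ∑ k ∈ Finset.range (K + 1), (1 : ENNReal) :=
          Finset.sum_le_sum fun k _ => by split_ifs <;> simp
      _ = ENNReal.ofReal (K + 1) := by
          simp [ENNReal.ofReal_add]
      _ ≤ _ := ENNReal.ofReal_le_ofReal hlog
  · rw [Set.not_nonempty_iff_eq_empty] at hne
    have : ∀ k : ℕ, (if y < α (2 ^ k) then (1 : ENNReal) else 0) = 0 := fun k =>
      if_neg fun h => by
        have : k ∈ {k : ℕ | y < α (2 ^ k)} := h
        rw [hne] at this; exact this
    simp [this]

lemma tail_vol_le {Ω : Type*} [MeasurableSpace Ω] (P : Measure Ω) [IsProbabilityMeasure P]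
    {Y : Ω → ℝ} (hY : Measurable Y) (hi : Integrable Y P) (hY0 : ∀ ω, 0 ≤ Y ω)
    {y : ℝ} (hy : 0 < y) :
    ∫⁻ s in Set.Ioi (0 : ℝ), (if y < P.real {ω | s < Y ω} then (1 : ENNReal) else 0)
      ≤ ENNReal.ofReal (rcInv (fun x => 1 - distFun P Y x) y) := by
  have hd : ∀ x, 1 - distFun P Y x = P.real {ω | x < Y ω} := by
    intro x
    have h := prob_compl_eq_one_sub₀ (μ := P) (s := {ω | Y ω ≤ x})
      (measurableSet_le hY measurable_const).nullMeasurableSet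
    have h2 : {ω | Y ω ≤ x}ᶜ = {ω | x < Y ω} := by ext ω; simp
    have h3 := probReal_compl_eq_one_sub (μ := P) (measurableSet_le hY (measurable_const (a := x)))
    rw [h2] at h3
    rw [h3]; rfl
  simp_rw [hd]
  have hbdd : BddAbove { x : ℝ | 0 ≤ x ∧ y < P.real {ω | x < Y ω} } := by
    refine ⟨(∫ ω, Y ω ∂P) / y, ?_⟩
    rintro x ⟨hx0, hx⟩
    rw [le_div_iff₀ hy]
    have h1 := mul_meas_ge_le_integral_of_nonneg (μ := P) (ae_of_all _ hY0) hi x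
    have h2 : P.real {ω | x < Y ω} ≤ P.real {ω | x ≤ Y ω} :=
      measureReal_mono fun ω (h : x < Y ω) => (le_of_lt h : x ≤ Y ω)
    nlinarith
  have hanti : Antitone fun s : ℝ => P.real {ω | s < Y ω} := fun s t hst =>
    measureReal_mono fun ω h => lt_of_le_of_lt hst h
  have hms : MeasurableSet {s : ℝ | y < P.real {ω | s < Y ω}} :=
    measurableSet_lt measurable_const hanti.measurable
  calc _ = ∫⁻ s in Set.Ioi (0 : ℝ), {s : ℝ | y < P.real {ω | s < Y ω}}.indicator 1 s := by
        refine lintegral_congr fun s => ?_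
        simp [Set.indicator_apply]
    _ = volume ({s : ℝ | y < P.real {ω | s < Y ω}} ∩ Set.Ioi 0) := by
        rw [lintegral_indicator_one hms, Measure.restrict_apply hms]
    _ ≤ volume (Set.Icc 0 (rcInv (fun x => P.real {ω | x < Y ω}) y)) := by
        refine measure_mono ?_
        rintro s ⟨h1, h2⟩
        exact ⟨le_of_lt h2, le_csSup hbdd ⟨le_of_lt h2, h1⟩⟩
    _ = _ := by simp

lemma cond_conv {Ω : Type*} [MeasurableSpace Ω] (P : Measure Ω) [IsProbabilityMeasure P]
    {Y : Ω → ℝ} (hY : Measurable Y) (hi : Integrable Y P) (hY0 : ∀ ω, 0 ≤ Y ω)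
    {α : ℕ → ℝ} (hα : Tendsto α atTop (nhds 0))
    (hcond : IntegrableOn (fun y => Real.log (1 + rcInv (alphaExt α) (y / 2)) *
        rcInv (fun x => 1 - distFun P Y x) y) (Set.Ioo (0 : ℝ) 1)) :
    ∑' k : ℕ, ∫⁻ s in Set.Ioi (0 : ℝ), min (ENNReal.ofReal (α (2 ^ k))) (P {ω | s < Y ω}) ≠ ⊤ := by
  have hl2 : 0 < Real.log 2 := Real.log_pos one_lt_two
  have hanti : Antitone fun s : ℝ => P.real {ω | s < Y ω} := fun s t hst =>
    measureReal_mono fun ω h => lt_of_le_of_lt hst h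
  set F : ℕ → ℝ → ENNReal := fun k y => if y < α (2 ^ k) then (1 : ENNReal) else 0 with hF
  set H : ℝ → ℝ → ENNReal := fun y s => if y < P.real {ω | s < Y ω} then (1 : ENNReal) else 0 with hH
  have hFm : ∀ k, Measurable (F k) := fun k =>
    Measurable.ite (measurableSet_lt measurable_id measurable_const) measurable_const measurable_const
  have hHm : Measurable (Function.uncurry H) := by
    refine Measurable.ite (measurableSet_lt measurable_fst ?_) measurable_const measurable_const
    exact hanti.measurable.comp measurable_snd
  have h1 : ∀ k s, min (ENNReal.ofReal (α (2 ^ k))) (P {ω | s < Y ω})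
      ≤ ∫⁻ y in Set.Ioo (0 : ℝ) 1, F k y * H y s := by
    intro k s
    set v := min (α (2 ^ k)) (P.real {ω | s < Y ω}) with hv
    have hv1 : v ≤ 1 := (min_le_right _ _).trans measureReal_le_one
    have e : min (ENNReal.ofReal (α (2 ^ k))) (P {ω | s < Y ω}) = ENNReal.ofReal v := by
      rw [hv, ENNReal.ofReal_min, ofReal_measureReal]
    rw [e]
    calc ENNReal.ofReal v = ∫⁻ y in Set.Ioo (0 : ℝ) v, 1 := by simp
      _ ≤ ∫⁻ y in Set.Ioo (0 : ℝ) v, F k y * H y s := by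
          refine setLIntegral_mono' measurableSet_Ioo fun y hy => ?_
          have h1 : y < α (2 ^ k) := lt_of_lt_of_le hy.2 (min_le_left _ _)
          have h2 : y < P.real {ω | s < Y ω} := lt_of_lt_of_le hy.2 (min_le_right _ _)
          simp [hF, hH, h1, h2]
      _ ≤ _ := lintegral_mono_set (Set.Ioo_subset_Ioo_right hv1)
  have h2 : ∑' k : ℕ, ∫⁻ s in Set.Ioi (0 : ℝ), min (ENNReal.ofReal (α (2 ^ k))) (P {ω | s < Y ω})
      ≤ ∫⁻ y in Set.Ioo (0 : ℝ) 1, (∑' k, F k y) * ∫⁻ s in Set.Ioi (0 : ℝ), H y s := by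
    calc _ ≤ ∑' k : ℕ, ∫⁻ s in Set.Ioi (0 : ℝ), ∫⁻ y in Set.Ioo (0 : ℝ) 1, F k y * H y s :=
          ENNReal.tsum_le_tsum fun k => lintegral_mono fun s => h1 k s
      _ = ∑' k : ℕ, ∫⁻ y in Set.Ioo (0 : ℝ) 1, ∫⁻ s in Set.Ioi (0 : ℝ), F k y * H y s := by
          congr 1; ext k
          apply lintegral_lintegral_swap
          apply Measurable.aemeasurable
          exact ((hFm k).comp measurable_snd).mul (hHm.comp measurable_swap)
      _ = ∑' k : ℕ, ∫⁻ y in Set.Ioo (0 : ℝ) 1, F k y * ∫⁻ s in Set.Ioi (0 : ℝ), H y s := by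
          congr 1; ext k
          refine lintegral_congr fun y => ?_
          exact lintegral_const_mul _ (hHm.comp measurable_prodMk_left)
      _ = ∫⁻ y in Set.Ioo (0 : ℝ) 1, ∑' k : ℕ, F k y * ∫⁻ s in Set.Ioi (0 : ℝ), H y s := by
          rw [lintegral_tsum]
          intro k
          exact ((hFm k).mul hHm.lintegral_prod_right').aemeasurable
      _ = _ := by simp_rw [ENNReal.tsum_mul_right]
  refine ne_top_of_le_ne_top ?_ h2
  have h3 := (hcond.const_mul (2 / Real.log 2)).lintegral_lt_top
  refine ne_top_of_le_ne_top h3.ne (setLIntegral_mono' measurableSet_Ioo fun y hy => ?_)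
  have a1 := count_le hα hy.1
  have a2 := tail_vol_le P hY hi hY0 hy.1
  have hlog : 0 ≤ Real.log (1 + rcInv (alphaExt α) (y / 2)) := by
    apply Real.log_nonneg
    have : 0 ≤ rcInv (alphaExt α) (y / 2) := Real.sSup_nonneg fun x hx => hx.1
    linarith
  rw [← mul_assoc, ENNReal.ofReal_mul (by positivity)]
  exact mul_le_mul' a1 a2

lemma ae_tendsto_of_tsum {Ω : Type*} [MeasurableSpace Ω] (P : Measure Ω)
    {x : ℕ → ℕ → Ω → ℝ} (hx0 : ∀ j k ω, 0 ≤ x j k ω) (hm : ∀ j k, AEMeasurable (x j k) P)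
    (hs : ∑' k, ∑' j, ∫⁻ ω, ENNReal.ofReal (x j k ω) ∂P ≠ ⊤) :
    ∀ᵐ ω ∂P, Tendsto (fun j => ∑ k ∈ Finset.range j, x j k ω) atTop (nhds 0) := by
  rw [ENNReal.tsum_comm] at hs
  have e : ∑' j, ∑' k, ∫⁻ ω, ENNReal.ofReal (x j k ω) ∂P
      = ∫⁻ ω, ∑' j, ∑' k, ENNReal.ofReal (x j k ω) ∂P := by
    rw [lintegral_tsum fun j => AEMeasurable.ennreal_tsum fun k => (hm j k).ennreal_ofReal]
    congr 1; ext j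
    rw [lintegral_tsum fun k => (hm j k).ennreal_ofReal]
  rw [e] at hs
  have hae := ae_lt_top' (AEMeasurable.ennreal_tsum fun j => AEMeasurable.ennreal_tsum fun k =>
    (hm j k).ennreal_ofReal) hs
  filter_upwards [hae] with ω hω
  have h1 := ENNReal.tendsto_atTop_zero_of_tsum_ne_top hω.ne
  have h2 : Tendsto (fun j => ENNReal.ofReal (∑ k ∈ Finset.range j, x j k ω)) atTop (nhds 0) := by
    refine tendsto_of_tendsto_of_tendsto_of_le_of_le tendsto_const_nhds h1 (fun _ => zero_le) ?_
    intro j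
    simp only
    rw [ENNReal.ofReal_sum_of_nonneg fun k _ => hx0 j k ω]
    exact ENNReal.sum_le_tsum _
  have h3 := (ENNReal.tendsto_toReal ENNReal.zero_ne_top).comp h2
  simp only [ENNReal.toReal_zero] at h3
  refine h3.congr fun j => ?_
  exact ENNReal.toReal_ofReal (Finset.sum_nonneg fun k _ => hx0 j k ω)

/-- One layer of a nonnegative function. -/
noncomputable def layerFn (φ : ℝ → ℝ) (B : ℝ) (x : ℝ) : ℝ := min (φ x) B - min (φ x) (B / 4)

lemma layerFn_measurable {φ : ℝ → ℝ} (hφ : Measurable φ) (B : ℝ) : Measurable (layerFn φ B) :=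
  (hφ.min measurable_const).sub (hφ.min measurable_const)

lemma layerFn_nonneg (φ : ℝ → ℝ) {B : ℝ} (hB : 0 ≤ B) (x : ℝ) : 0 ≤ layerFn φ B x :=
  sub_nonneg.2 (min_le_min_left _ (by linarith))

lemma layerFn_le {φ : ℝ → ℝ} (hφ0 : ∀ x, 0 ≤ φ x) {B : ℝ} (hB : 0 ≤ B) (x : ℝ) :
    layerFn φ B x ≤ B := by
  have h1 := min_le_right (φ x) B
  have h2 : 0 ≤ min (φ x) (B / 4) := le_min (hφ0 x) (by linarith)
  unfold layerFn; linarith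

lemma layerFn_integral_le {Ω : Type*} [MeasurableSpace Ω] (P : Measure Ω) [IsProbabilityMeasure P]
    {Y : Ω → ℝ} (hY : Measurable Y) {φ : ℝ → ℝ} (hφ : Measurable φ) (hφ0 : ∀ x, 0 ≤ φ x)
    (hφ1 : ∀ x, φ x ≤ |x|) {B : ℝ} (hB : 0 ≤ B) :
    ∫ ω, layerFn φ B (Y ω) ∂P ≤ B * P.real {ω | B / 4 < |Y ω|} := by
  have hms : MeasurableSet {ω | B / 4 < |Y ω|} := measurableSet_lt measurable_const hY.abs
  have hb : ∫ ω, {ω | B / 4 < |Y ω|}.indicator (fun _ => B) ω ∂P = B * P.real {ω | B / 4 < |Y ω|} := by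
    rw [integral_indicator_const _ hms, smul_eq_mul, mul_comm]
  rw [← hb]
  refine integral_mono ?_ ((integrable_const B).indicator hms) fun ω => ?_
  · exact Integrable.of_bound ((layerFn_measurable hφ B).comp hY).aestronglyMeasurable B
      (ae_of_all _ fun ω => by
        rw [Real.norm_of_nonneg (layerFn_nonneg φ hB _)]; exact layerFn_le hφ0 hB _)
  · by_cases h : B / 4 < |Y ω|
    · rw [Set.indicator_of_mem (show ω ∈ {ω | B / 4 < |Y ω|} from h)]
      exact layerFn_le hφ0 hB _
    · rw [Set.indicator_of_notMem (show ω ∉ {ω | B / 4 < |Y ω|} from h)]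
      have h1 : φ (Y ω) ≤ B / 4 := (hφ1 _).trans (not_lt.1 h)
      unfold layerFn
      rw [min_eq_left h1, min_eq_left (by linarith)]; simp

section Sub

variable {Ω : Type*} [MeasurableSpace Ω] (P : Measure Ω) [IsProbabilityMeasure P]
  {ξ : ℕ → Ω → ℝ}

lemma ident_integral (hmeas : ∀ i, Measurable (ξ i))
    (hident : ∀ i, Measure.map (ξ i) P = Measure.map (ξ 0) P) {g : ℝ → ℝ} (hg : Measurable g)
    (i : ℕ) : ∫ ω, g (ξ i ω) ∂P = ∫ ω, g (ξ 0 ω) ∂P := by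
  rw [← integral_map (hmeas i).aemeasurable hg.aestronglyMeasurable, hident i,
    integral_map (hmeas 0).aemeasurable hg.aestronglyMeasurable]

lemma ident_tail (hmeas : ∀ i, Measurable (ξ i))
    (hident : ∀ i, Measure.map (ξ i) P = Measure.map (ξ 0) P) (s : ℝ)
    (i : ℕ) : P {ω | s < |ξ i ω|} = P {ω | s < |ξ 0 ω|} := by
  have hs : MeasurableSet {x : ℝ | s < |x|} := measurableSet_lt measurable_const measurable_id.abs
  have h1 := Measure.map_apply (μ := P) (hmeas i) hs
  have h2 := Measure.map_apply (μ := P) (hmeas 0) hs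
  rw [hident i, h2] at h1
  exact h1.symm

/-- `L¹` part. -/
noncomputable def partB (P : Measure Ω) (ξ : ℕ → Ω → ℝ) (φ : ℝ → ℝ) (B : ℝ) (p n : ℕ) (ω : Ω) : ℝ :=
  ∑ i ∈ Finset.range n, ((P[fun ω => layerFn φ B (ξ i ω) | pastSigma ξ i p]) ω
    - ∫ ω, layerFn φ B (ξ i ω) ∂P)

/-- `L²` part. -/
noncomputable def partA (P : Measure Ω) (ξ : ℕ → Ω → ℝ) (φ : ℝ → ℝ) (B : ℝ) (p n : ℕ) (ω : Ω) : ℝ :=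
  ∑ i ∈ Finset.range n, devD P ξ (layerFn φ B) p i ω

lemma partA_add_partB (φ : ℝ → ℝ) (B : ℝ) (p n : ℕ) (ω : Ω) :
    partA P ξ φ B p n ω + partB P ξ φ B p n ω
      = ∑ i ∈ Finset.range n, (layerFn φ B (ξ i ω) - ∫ ω, layerFn φ B (ξ i ω) ∂P) := by
  unfold partA partB devD
  rw [← Finset.sum_add_distrib]
  exact Finset.sum_congr rfl fun i _ => by ring

lemma lintegral_partB_le (hmeas : ∀ i, Measurable (ξ i))
    (hident : ∀ i, Measure.map (ξ i) P = Measure.map (ξ 0) P) {φ : ℝ → ℝ} (hφ : Measurable φ)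
    (hφ0 : ∀ x, 0 ≤ φ x) (hφ1 : ∀ x, φ x ≤ |x|) {q M : ℝ} (hq : 0 < q) (hM : 0 < M) {p n : ℕ}
    (hn : n ≤ M) :
    ∫⁻ ω, ENNReal.ofReal |partB P ξ φ (4 * q) p n ω / M| ∂P
      ≤ 8 * (ENNReal.ofReal q * min (ENNReal.ofReal (alphaCoef P ξ p)) (P {ω | q < |ξ 0 ω|})) := by
  have hB : (0 : ℝ) ≤ 4 * q := by positivity
  have hgm := layerFn_measurable hφ (4 * q)
  set v := min (alphaCoef P ξ p) (P.real {ω | q < |ξ 0 ω|}) with hv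
  have hv0 : 0 ≤ v := le_min (alphaCoef_nonneg P ξ p) measureReal_nonneg
  have hterm : ∀ i, Integrable (fun ω => (P[fun ω => layerFn φ (4 * q) (ξ i ω) | pastSigma ξ i p]) ω
    - ∫ ω, layerFn φ (4 * q) (ξ i ω) ∂P) P := fun i => integrable_condExp.sub (integrable_const _)
  have hint : Integrable (partB P ξ φ (4 * q) p n) P := by
    unfold partB
    exact integrable_finsetSum _ fun i _ => hterm i
  have hdev : ∀ i, ∫ ω, |(P[fun ω => layerFn φ (4 * q) (ξ i ω) | pastSigma ξ i p]) ω
    - ∫ ω, layerFn φ (4 * q) (ξ i ω) ∂P| ∂P ≤ 8 * (q * v) := by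
    intro i
    have h1 := condExp_dev_le P hmeas hgm (layerFn_nonneg φ hB) (layerFn_le hφ0 hB) i p
    have h2 : ∫ ω, layerFn φ (4 * q) (ξ i ω) ∂P ≤ 4 * q * P.real {ω | q < |ξ 0 ω|} := by
      rw [ident_integral P hmeas hident hgm i]
      have := layerFn_integral_le P (hmeas 0) hφ hφ0 hφ1 hB
      rwa [show 4 * q / 4 = q by ring] at this
    refine h1.trans ?_
    have h3 : min (4 * q * alphaCoef P ξ p) (∫ ω, layerFn φ (4 * q) (ξ i ω) ∂P) ≤ 4 * q * v := by
      rw [hv, mul_min_of_nonneg _ _ hB]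
      exact min_le_min_left _ h2
    linarith
  have hreal : ∫ ω, |partB P ξ φ (4 * q) p n ω / M| ∂P ≤ 8 * (q * v) := by
    calc ∫ ω, |partB P ξ φ (4 * q) p n ω / M| ∂P
        = (∫ ω, |partB P ξ φ (4 * q) p n ω| ∂P) / M := by
          simp_rw [abs_div, abs_of_pos hM]; rw [integral_div]
      _ ≤ (∑ i ∈ Finset.range n, 8 * (q * v)) / M := by
          refine div_le_div_of_nonneg_right ?_ hM.le
          calc _ ≤ ∫ ω, ∑ i ∈ Finset.range n,
                |(P[fun ω => layerFn φ (4 * q) (ξ i ω) | pastSigma ξ i p]) ω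
                  - ∫ ω, layerFn φ (4 * q) (ξ i ω) ∂P| ∂P := by
                refine integral_mono hint.abs (integrable_finsetSum _ fun i _ => (hterm i).abs) ?_
                intro ω
                exact Finset.abs_sum_le_sum_abs _ _
            _ ≤ _ := by
                rw [integral_finsetSum _ fun i _ => (hterm i).abs]
                exact Finset.sum_le_sum fun i _ => hdev i
      _ ≤ 8 * (q * v) := by
          rw [div_le_iff₀ hM]
          simp only [Finset.sum_const, Finset.card_range, nsmul_eq_mul]
          have : 0 ≤ 8 * (q * v) := by positivity
          nlinarith
  rw [← ofReal_integral_eq_lintegral_ofReal (hint.div_const M).abs (ae_of_all _ fun ω => abs_nonneg _)]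
  calc _ ≤ ENNReal.ofReal (8 * (q * v)) := ENNReal.ofReal_le_ofReal hreal
    _ = _ := by
        rw [ENNReal.ofReal_mul (by norm_num), ENNReal.ofReal_mul hq.le, hv, ENNReal.ofReal_min,
          ofReal_measureReal]
        norm_num

lemma lintegral_partA_le (hmeas : ∀ i, Measurable (ξ i))
    (hident : ∀ i, Measure.map (ξ i) P = Measure.map (ξ 0) P) {φ : ℝ → ℝ} (hφ : Measurable φ)
    (hφ0 : ∀ x, 0 ≤ φ x) (hφ1 : ∀ x, φ x ≤ |x|) {q M w : ℝ} (hq : 0 < q) (hM : 0 < M) (hw : 0 ≤ w)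
    {p n : ℕ} (hn : n ≤ M) {κ : ℝ} (hκ : w * (2 * p * (4 * q / M) * 4) ≤ κ) :
    ∫⁻ ω, ENNReal.ofReal (w * (partA P ξ φ (4 * q) p n ω / M) ^ 2) ∂P
      ≤ ENNReal.ofReal κ * (ENNReal.ofReal q * P {ω | q < |ξ 0 ω|}) := by
  have hB : (0 : ℝ) ≤ 4 * q := by positivity
  have hgm := layerFn_measurable hφ (4 * q)
  have hκ0 : 0 ≤ κ := le_trans (by positivity) hκ
  set e := ∫ ω, layerFn φ (4 * q) (ξ 0 ω) ∂P with he
  have he0 : 0 ≤ e := integral_nonneg fun ω => layerFn_nonneg φ hB _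
  have he1 : e ≤ 4 * q * P.real {ω | q < |ξ 0 ω|} := by
    have := layerFn_integral_le P (hmeas 0) hφ hφ0 hφ1 hB
    rwa [show 4 * q / 4 = q by ring] at this
  have h1 := devD_sum_sq_le P hmeas hgm (layerFn_nonneg φ hB) (layerFn_le hφ0 hB)
    (fun i => ident_integral P hmeas hident hgm i) p n
  have hL : MemLp (partA P ξ φ (4 * q) p n) 2 P := by
    unfold partA
    exact memLp_finsetSum _ fun i _ =>
      devD_memLp P hmeas hgm (layerFn_nonneg φ hB) (layerFn_le hφ0 hB) p i
  have hint : Integrable (fun ω => w * (partA P ξ φ (4 * q) p n ω / M) ^ 2) P := by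
    simp_rw [div_pow]
    exact (hL.integrable_sq.div_const _).const_mul w
  have hreal : ∫ ω, w * (partA P ξ φ (4 * q) p n ω / M) ^ 2 ∂P
      ≤ κ * (q * P.real {ω | q < |ξ 0 ω|}) := by
    rw [integral_const_mul]
    simp_rw [div_pow]
    rw [integral_div]
    have hg0 : 0 ≤ P.real {ω | q < |ξ 0 ω|} := measureReal_nonneg
    calc w * ((∫ ω, partA P ξ φ (4 * q) p n ω ^ 2 ∂P) / M ^ 2)
        ≤ w * ((M * (2 * p) * (4 * q * (4 * q * P.real {ω | q < |ξ 0 ω|}))) / M ^ 2) := by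
          gcongr
          refine le_trans h1 ?_
          gcongr
      _ = w * (2 * p * (4 * q / M) * 4) * (q * P.real {ω | q < |ξ 0 ω|}) := by
          field_simp
      _ ≤ _ := by gcongr
  rw [← ofReal_integral_eq_lintegral_ofReal hint (ae_of_all _ fun ω => by positivity)]
  calc _ ≤ _ := ENNReal.ofReal_le_ofReal hreal
    _ = _ := by
        rw [ENNReal.ofReal_mul hκ0, ENNReal.ofReal_mul hq.le, ofReal_measureReal]

end Sub

lemma subseq_tendsto {Ω : Type*} [MeasurableSpace Ω] (P : Measure Ω) [IsProbabilityMeasure P]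
    {ξ : ℕ → Ω → ℝ} (hmeas : ∀ i, Measurable (ξ i))
    (hident : ∀ i, Measure.map (ξ i) P = Measure.map (ξ 0) P) (hint : Integrable (ξ 0) P)
    (hH : ∑' k : ℕ, ∫⁻ s in Set.Ioi (0 : ℝ),
      min (ENNReal.ofReal (alphaCoef P ξ (2 ^ k))) (P {ω | s < |ξ 0 ω|}) ≠ ⊤)
    {φ : ℝ → ℝ} (hφ : Measurable φ)
    (hφ0 : ∀ x, 0 ≤ φ x) (hφ1 : ∀ x, φ x ≤ |x|) {ρ : ℝ} (hρ : 1 < ρ) (hρ2 : ρ ≤ 2) :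
    ∀ᵐ ω ∂P, Tendsto (fun j : ℕ => (∑ i ∈ Finset.range ⌊ρ ^ j⌋₊, φ (ξ i ω)) / (⌊ρ ^ j⌋₊ : ℝ))
      atTop (nhds (∫ ω, φ (ξ 0 ω) ∂P)) := by
  have hρ0 : 0 < ρ := by linarith
  set Gb : ℝ → ENNReal := fun s => P {ω | s < |ξ 0 ω|} with hGb
  have hGanti : Antitone Gb := tail_antitone P fun ω => |ξ 0 ω|
  have hGint : ∫⁻ s in Set.Ioi (0 : ℝ), Gb s ≠ ⊤ := by
    rw [hGb, ← lintegral_eq_lintegral_meas_lt P (ae_of_all _ fun ω => abs_nonneg _)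
      (hmeas 0).abs.aemeasurable]
    exact hint.abs.lintegral_lt_top.ne
  set C := ENNReal.ofReal (ρ / (ρ - 1)) with hC
  have hCt : C ≠ ⊤ := ENNReal.ofReal_ne_top
  have hMpos : ∀ j : ℕ, 0 < ρ ^ j := fun j => by positivity
  have hn : ∀ j : ℕ, ((⌊ρ ^ j⌋₊ : ℕ) : ℝ) ≤ ρ ^ j := fun j => Nat.floor_le (hMpos j).le
  have hqpos : ∀ j k : ℕ, 0 < (1 / 4 ^ (k + 1) : ℝ) * ρ ^ j := fun j k => by positivity
  -- the `L¹` part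
  have hB : ∀ᵐ ω ∂P, Tendsto (fun j => ∑ k ∈ Finset.range j,
      |partB P ξ φ (4 * ((1 / 4 ^ (k + 1) : ℝ) * ρ ^ j)) (2 ^ k) ⌊ρ ^ j⌋₊ ω / ρ ^ j|)
      atTop (nhds 0) := by
    refine ae_tendsto_of_tsum P (x := fun j k ω =>
      |partB P ξ φ (4 * ((1 / 4 ^ (k + 1) : ℝ) * ρ ^ j)) (2 ^ k) ⌊ρ ^ j⌋₊ ω / ρ ^ j|)
      (fun j k ω => abs_nonneg _) ?_ ?_
    · intro j k
      have : Integrable (partB P ξ φ (4 * ((1 / 4 ^ (k + 1) : ℝ) * ρ ^ j)) (2 ^ k) ⌊ρ ^ j⌋₊) P := by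
        unfold partB
        exact integrable_finsetSum _ fun i _ => integrable_condExp.sub (integrable_const _)
      exact (this.div_const _).abs.aemeasurable
    · have hk : ∀ k, ∑' j, ∫⁻ ω, ENNReal.ofReal
          |partB P ξ φ (4 * ((1 / 4 ^ (k + 1) : ℝ) * ρ ^ j)) (2 ^ k) ⌊ρ ^ j⌋₊ ω / ρ ^ j| ∂P
          ≤ (8 * C) * ∫⁻ s in Set.Ioi (0 : ℝ),
              min (ENNReal.ofReal (alphaCoef P ξ (2 ^ k))) (P {ω | s < |ξ 0 ω|}) := by
        intro k
        have hf : Antitone fun s : ℝ => min (ENNReal.ofReal (alphaCoef P ξ (2 ^ k)))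
            (P {ω | s < |ξ 0 ω|}) := fun s t hst => min_le_min_left _ (hGanti hst)
        calc _ ≤ ∑' j : ℕ, 8 * (ENNReal.ofReal ((1 / 4 ^ (k + 1) : ℝ) * ρ ^ j) *
              min (ENNReal.ofReal (alphaCoef P ξ (2 ^ k)))
                (P {ω | (1 / 4 ^ (k + 1) : ℝ) * ρ ^ j < |ξ 0 ω|})) :=
              ENNReal.tsum_le_tsum fun j => lintegral_partB_le P hmeas hident hφ hφ0 hφ1
                (hqpos j k) (hMpos j) (hn j)
          _ ≤ _ := by
              rw [ENNReal.tsum_mul_left, mul_assoc]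
              gcongr
              exact tsum_geom_le hf (by positivity) hρ
      refine ne_top_of_le_ne_top ?_ (ENNReal.tsum_le_tsum hk)
      rw [ENNReal.tsum_mul_left]
      exact ENNReal.mul_ne_top (ENNReal.mul_ne_top (by norm_num) hCt) hH
  -- the `L²` part
  have hA : ∀ᵐ ω ∂P, Tendsto (fun j => ∑ k ∈ Finset.range j, (3 / 2 : ℝ) ^ k *
      (partA P ξ φ (4 * ((1 / 4 ^ (k + 1) : ℝ) * ρ ^ j)) (2 ^ k) ⌊ρ ^ j⌋₊ ω / ρ ^ j) ^ 2)
      atTop (nhds 0) := by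
    refine ae_tendsto_of_tsum P (x := fun j k ω => (3 / 2 : ℝ) ^ k *
      (partA P ξ φ (4 * ((1 / 4 ^ (k + 1) : ℝ) * ρ ^ j)) (2 ^ k) ⌊ρ ^ j⌋₊ ω / ρ ^ j) ^ 2)
      (fun j k ω => by positivity) ?_ ?_
    · intro j k
      have hb0 : 0 ≤ 4 * ((1 / 4 ^ (k + 1) : ℝ) * ρ ^ j) := by positivity
      have hL : MemLp (partA P ξ φ (4 * ((1 / 4 ^ (k + 1) : ℝ) * ρ ^ j)) (2 ^ k) ⌊ρ ^ j⌋₊) 2 P := by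
        unfold partA
        exact memLp_finsetSum _ fun i _ => devD_memLp P hmeas (layerFn_measurable hφ _)
          (layerFn_nonneg φ hb0) (layerFn_le hφ0 hb0) _ i
      exact ((hL.aestronglyMeasurable.aemeasurable.div_const _).pow_const 2).const_mul _
    · have hk : ∀ k : ℕ, ∑' j, ∫⁻ ω, ENNReal.ofReal ((3 / 2 : ℝ) ^ k *
          (partA P ξ φ (4 * ((1 / 4 ^ (k + 1) : ℝ) * ρ ^ j)) (2 ^ k) ⌊ρ ^ j⌋₊ ω / ρ ^ j) ^ 2) ∂P
          ≤ ENNReal.ofReal (8 * (3 / 4 : ℝ) ^ k) * (C * ∫⁻ s in Set.Ioi (0 : ℝ), Gb s) := by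
        intro k
        calc _ ≤ ∑' j : ℕ, ENNReal.ofReal (8 * (3 / 4 : ℝ) ^ k) *
              (ENNReal.ofReal ((1 / 4 ^ (k + 1) : ℝ) * ρ ^ j) *
                Gb ((1 / 4 ^ (k + 1) : ℝ) * ρ ^ j)) := by
              refine ENNReal.tsum_le_tsum fun j => lintegral_partA_le P hmeas hident hφ hφ0 hφ1
                (hqpos j k) (hMpos j) (by positivity) (hn j) (le_of_eq ?_)
              have h4 : (4 : ℝ) ^ k = 2 ^ k * 2 ^ k := by rw [← mul_pow]; norm_num
              have := hMpos j
              push_cast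
              rw [div_pow, div_pow, pow_succ, h4]
              field_simp
              norm_num
          _ ≤ _ := by
              rw [ENNReal.tsum_mul_left]
              gcongr
              exact tsum_geom_le hGanti (by positivity) hρ
      refine ne_top_of_le_ne_top ?_ (ENNReal.tsum_le_tsum hk)
      rw [ENNReal.tsum_mul_right]
      refine ENNReal.mul_ne_top ?_ (ENNReal.mul_ne_top hCt hGint)
      have hsum : Summable fun k : ℕ => 8 * (3 / 4 : ℝ) ^ k :=
        (summable_geometric_of_lt_one (by norm_num) (by norm_num)).mul_left 8
      rw [← ENNReal.ofReal_tsum_of_nonneg (fun k => by positivity) hsum]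
      exact ENNReal.ofReal_ne_top
  -- Borel-Cantelli
  have hBC : ∀ᵐ ω ∂P, ∀ᶠ j : ℕ in atTop, ∀ i < ⌊ρ ^ j⌋₊, φ (ξ i ω) ≤ ρ ^ j := by
    have h1 : ∑' j : ℕ, P (⋃ i ∈ Finset.range ⌊ρ ^ j⌋₊, {ω | ρ ^ j < |ξ i ω|}) ≠ ⊤ := by
      have h2 : ∀ j : ℕ, P (⋃ i ∈ Finset.range ⌊ρ ^ j⌋₊, {ω | ρ ^ j < |ξ i ω|})
          ≤ ENNReal.ofReal (1 * ρ ^ j) * Gb (1 * ρ ^ j) := by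
        intro j
        refine (measure_biUnion_finset_le _ _).trans ?_
        simp_rw [ident_tail P hmeas hident]
        rw [Finset.sum_const, Finset.card_range, nsmul_eq_mul, one_mul]
        gcongr
        rw [← ENNReal.ofReal_natCast]
        exact ENNReal.ofReal_le_ofReal (hn j)
      refine ne_top_of_le_ne_top ?_ (ENNReal.tsum_le_tsum h2)
      refine ne_top_of_le_ne_top ?_ (tsum_geom_le hGanti one_pos hρ)
      exact ENNReal.mul_ne_top hCt hGint
    filter_upwards [ae_eventually_notMem h1] with ω hω
    filter_upwards [hω] with j hj i hi
    simp only [Set.mem_iUnion, not_exists] at hj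
    have := hj i (Finset.mem_range.2 hi)
    exact (hφ1 _).trans (not_lt.1 this)
  -- truncated means
  set m : ℝ → ℝ := fun B => ∫ ω, min (φ (ξ 0 ω)) B ∂P with hm
  have hφi : Integrable (fun ω => φ (ξ 0 ω)) P := by
    refine hint.abs.mono' (hφ.comp (hmeas 0)).aestronglyMeasurable (ae_of_all _ fun ω => ?_)
    rw [Real.norm_of_nonneg (hφ0 _)]; exact hφ1 _
  have hmi : ∀ B, Integrable (fun ω => min (φ (ξ 0 ω)) B) P := fun B =>
    hφi.inf (integrable_const B)
  have hMtop : Tendsto (fun j : ℕ => ρ ^ j) atTop atTop := tendsto_pow_atTop_atTop_of_one_lt hρ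
  have hmlim : Tendsto (fun j : ℕ => m (ρ ^ j)) atTop (nhds (∫ ω, φ (ξ 0 ω) ∂P)) := by
    refine tendsto_integral_of_dominated_convergence (fun ω => φ (ξ 0 ω))
      (fun j => (hmi _).aestronglyMeasurable) hφi ?_ ?_
    · intro j
      refine ae_of_all _ fun ω => ?_
      rw [Real.norm_of_nonneg (le_min (hφ0 _) (hMpos j).le)]
      exact min_le_left _ _
    · refine ae_of_all _ fun ω => ?_
      refine tendsto_const_nhds.congr' ?_
      filter_upwards [hMtop.eventually_ge_atTop (φ (ξ 0 ω))] with j hj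
      exact (min_eq_left hj).symm
  filter_upwards [hA, hB, hBC] with ω hωA hωB hωC
  set SA : ℕ → ℝ := fun j => ∑ k ∈ Finset.range j, (3 / 2 : ℝ) ^ k *
      (partA P ξ φ (4 * ((1 / 4 ^ (k + 1) : ℝ) * ρ ^ j)) (2 ^ k) ⌊ρ ^ j⌋₊ ω / ρ ^ j) ^ 2 with hSA
  set SB : ℕ → ℝ := fun j => ∑ k ∈ Finset.range j,
      |partB P ξ φ (4 * ((1 / 4 ^ (k + 1) : ℝ) * ρ ^ j)) (2 ^ k) ⌊ρ ^ j⌋₊ ω / ρ ^ j| with hSB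
  -- the deviation of the truncated sums
  set W : ℕ → ℝ := fun j => (∑ i ∈ Finset.range ⌊ρ ^ j⌋₊, (min (φ (ξ i ω)) (ρ ^ j) - m (ρ ^ j)))
    / ρ ^ j with hW
  have hWle : ∀ j, |W j| ≤ √(3 * SA j) + SB j + (1 / 2) ^ j := by
    intro j
    have hM := hMpos j
    set b : ℕ → ℝ := fun k => ρ ^ j / 4 ^ k with hb
    have hbk : ∀ k, 4 * ((1 / 4 ^ (k + 1) : ℝ) * ρ ^ j) = b k := by
      intro k; simp only [hb]; rw [pow_succ]; field_simp
    have hb4 : ∀ k, b k / 4 = b (k + 1) := by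
      intro k; simp only [hb]; rw [pow_succ]; field_simp
    have hb0 : ∀ k, 0 ≤ b k := fun k => by positivity
    have hlayer : ∀ k i, layerFn φ (b k) (ξ i ω) - ∫ ω, layerFn φ (b k) (ξ i ω) ∂P
        = (min (φ (ξ i ω)) (b k) - m (b k)) - (min (φ (ξ i ω)) (b (k + 1)) - m (b (k + 1))) := by
      intro k i
      rw [ident_integral P hmeas hident (layerFn_measurable hφ _) i]
      unfold layerFn
      rw [integral_sub (hmi _) (hmi _), hb4]
      ring
    have hdecomp : W j = (∑ k ∈ Finset.range j, partA P ξ φ (b k) (2 ^ k) ⌊ρ ^ j⌋₊ ω / ρ ^ j)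
        + (∑ k ∈ Finset.range j, partB P ξ φ (b k) (2 ^ k) ⌊ρ ^ j⌋₊ ω / ρ ^ j)
        + (∑ i ∈ Finset.range ⌊ρ ^ j⌋₊, (min (φ (ξ i ω)) (b j) - m (b j))) / ρ ^ j := by
      rw [← Finset.sum_add_distrib]
      simp_rw [← add_div, partA_add_partB, hlayer]
      rw [← Finset.sum_div, Finset.sum_comm, ← add_div, ← Finset.sum_add_distrib]
      simp only [hW]
      congr 1
      refine Finset.sum_congr rfl fun i _ => ?_
      rw [Finset.sum_range_sub' (fun k => min (φ (ξ i ω)) (b k) - m (b k))]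
      simp [hb]
    have hA' : |∑ k ∈ Finset.range j, partA P ξ φ (b k) (2 ^ k) ⌊ρ ^ j⌋₊ ω / ρ ^ j|
        ≤ √(3 * SA j) := by
      apply Real.abs_le_sqrt
      have h1 := Finset.sum_sq_le_sum_mul_sum_of_sq_eq_mul (Finset.range j)
        (r := fun k => partA P ξ φ (b k) (2 ^ k) ⌊ρ ^ j⌋₊ ω / ρ ^ j)
        (f := fun k => (2 / 3 : ℝ) ^ k)
        (g := fun k => (3 / 2 : ℝ) ^ k * (partA P ξ φ (b k) (2 ^ k) ⌊ρ ^ j⌋₊ ω / ρ ^ j) ^ 2)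
        (fun k _ => by positivity) (fun k _ => by positivity)
        (fun k _ => by
          rw [← mul_assoc, ← mul_pow]; norm_num)
      refine h1.trans ?_
      have h2 : ∑ k ∈ Finset.range j, (2 / 3 : ℝ) ^ k ≤ 3 := by
        have h3 := (summable_geometric_of_lt_one (r := (2 / 3 : ℝ)) (by norm_num)
          (by norm_num)).sum_le_tsum (Finset.range j) (fun k _ => by positivity)
        rw [tsum_geometric_of_lt_one (by norm_num) (by norm_num)] at h3
        refine h3.trans (by norm_num)
      have h4 : SA j = ∑ k ∈ Finset.range j,
          (3 / 2 : ℝ) ^ k * (partA P ξ φ (b k) (2 ^ k) ⌊ρ ^ j⌋₊ ω / ρ ^ j) ^ 2 := by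
        simp only [hSA, hbk]
      rw [h4]
      exact mul_le_mul_of_nonneg_right h2 (Finset.sum_nonneg fun k _ => by positivity)
    have hB' : |∑ k ∈ Finset.range j, partB P ξ φ (b k) (2 ^ k) ⌊ρ ^ j⌋₊ ω / ρ ^ j| ≤ SB j := by
      have h4 : SB j = ∑ k ∈ Finset.range j,
          |partB P ξ φ (b k) (2 ^ k) ⌊ρ ^ j⌋₊ ω / ρ ^ j| := by
        simp only [hSB, hbk]
      rw [h4]
      exact Finset.abs_sum_le_sum_abs _ _
    have hR : |(∑ i ∈ Finset.range ⌊ρ ^ j⌋₊, (min (φ (ξ i ω)) (b j) - m (b j))) / ρ ^ j|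
        ≤ (1 / 2) ^ j := by
      have hm0 : 0 ≤ m (b j) := integral_nonneg fun ω => le_min (hφ0 _) (hb0 j)
      have hm1 : m (b j) ≤ b j := by
        calc m (b j) ≤ ∫ ω, b j ∂P :=
              integral_mono (hmi _) (integrable_const _) fun ω => min_le_right _ _
          _ = b j := by simp
      have h1 : |∑ i ∈ Finset.range ⌊ρ ^ j⌋₊, (min (φ (ξ i ω)) (b j) - m (b j))|
          ≤ ρ ^ j * b j := by
        refine (Finset.abs_sum_le_sum_abs _ _).trans ?_
        calc _ ≤ ∑ i ∈ Finset.range ⌊ρ ^ j⌋₊, b j := by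
              refine Finset.sum_le_sum fun i _ => ?_
              have a1 : 0 ≤ min (φ (ξ i ω)) (b j) := le_min (hφ0 _) (hb0 j)
              have a2 : min (φ (ξ i ω)) (b j) ≤ b j := min_le_right _ _
              rw [abs_le]; constructor <;> linarith
          _ ≤ _ := by
              rw [Finset.sum_const, Finset.card_range, nsmul_eq_mul]
              exact mul_le_mul_of_nonneg_right (hn j) (hb0 j)
      rw [abs_div, abs_of_pos hM, div_le_iff₀ hM]
      refine h1.trans ?_
      rw [mul_comm]
      refine mul_le_mul_of_nonneg_right ?_ hM.le
      simp only [hb]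
      rw [← div_pow]
      exact pow_le_pow_left₀ (by positivity) (by linarith) j
    rw [hdecomp]
    exact (abs_add_le _ _).trans (add_le_add ((abs_add_le _ _).trans (add_le_add hA' hB')) hR)
  have hWlim : Tendsto (fun j => |W j|) atTop (nhds 0) := by
    have h1 : Tendsto (fun j => √(3 * SA j) + SB j + (1 / 2 : ℝ) ^ j) atTop (nhds 0) := by
      have a1 : Tendsto (fun j => √(3 * SA j)) atTop (nhds 0) := by
        have := (Real.continuous_sqrt.tendsto _).comp (hωA.const_mul 3)
        rw [mul_zero, Real.sqrt_zero] at this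
        exact this
      have a3 : Tendsto (fun j : ℕ => (1 / 2 : ℝ) ^ j) atTop (nhds 0) :=
        tendsto_pow_atTop_nhds_zero_of_lt_one (by norm_num) (by norm_num)
      simpa using (a1.add hωB).add a3
    exact squeeze_zero (fun j => abs_nonneg _) hWle h1
  -- conclusion
  have hdiff : Tendsto (fun j : ℕ => (∑ i ∈ Finset.range ⌊ρ ^ j⌋₊, φ (ξ i ω)) / (⌊ρ ^ j⌋₊ : ℝ)
      - m (ρ ^ j)) atTop (nhds 0) := by
    refine squeeze_zero_norm' ?_ (by simpa using hWlim.const_mul 2)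
    filter_upwards [hωC] with j hj
    have hM := hMpos j
    have h1 : 1 ≤ ρ ^ j := one_le_pow₀ hρ.le
    have hn1 : (1 : ℝ) ≤ (⌊ρ ^ j⌋₊ : ℝ) := by
      exact_mod_cast (Nat.one_le_floor_iff _).2 h1
    have hn2 : ρ ^ j ≤ 2 * (⌊ρ ^ j⌋₊ : ℝ) := by
      have := (Nat.lt_floor_add_one (ρ ^ j)).le
      linarith
    have e1 : (∑ i ∈ Finset.range ⌊ρ ^ j⌋₊, φ (ξ i ω)) / (⌊ρ ^ j⌋₊ : ℝ) - m (ρ ^ j)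
        = W j * (ρ ^ j / (⌊ρ ^ j⌋₊ : ℝ)) := by
      have e2 : ∑ i ∈ Finset.range ⌊ρ ^ j⌋₊, (min (φ (ξ i ω)) (ρ ^ j) - m (ρ ^ j))
          = ∑ i ∈ Finset.range ⌊ρ ^ j⌋₊, φ (ξ i ω) - (⌊ρ ^ j⌋₊ : ℝ) * m (ρ ^ j) := by
        rw [Finset.sum_sub_distrib, Finset.sum_const, Finset.card_range, nsmul_eq_mul]
        congr 1
        exact Finset.sum_congr rfl fun i hi => min_eq_left (hj i (Finset.mem_range.1 hi))
      simp only [hW]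
      rw [e2]
      have : (⌊ρ ^ j⌋₊ : ℝ) ≠ 0 := by linarith
      field_simp
    rw [e1, Real.norm_eq_abs, abs_mul, abs_of_nonneg (by positivity : 0 ≤ ρ ^ j / (⌊ρ ^ j⌋₊ : ℝ)),
      mul_comm]
    refine mul_le_mul_of_nonneg_right ?_ (abs_nonneg _)
    rw [div_le_iff₀ (by linarith)]
    exact hn2
  have := hdiff.add hmlim
  simpa using this

lemma slln_nonneg {Ω : Type*} [MeasurableSpace Ω] (P : Measure Ω) [IsProbabilityMeasure P]
    {ξ : ℕ → Ω → ℝ} (hmeas : ∀ i, Measurable (ξ i))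
    (hident : ∀ i, Measure.map (ξ i) P = Measure.map (ξ 0) P) (hint : Integrable (ξ 0) P)
    (hH : ∑' k : ℕ, ∫⁻ s in Set.Ioi (0 : ℝ),
      min (ENNReal.ofReal (alphaCoef P ξ (2 ^ k))) (P {ω | s < |ξ 0 ω|}) ≠ ⊤)
    {φ : ℝ → ℝ} (hφ : Measurable φ)
    (hφ0 : ∀ x, 0 ≤ φ x) (hφ1 : ∀ x, φ x ≤ |x|) :
    ∀ᵐ ω ∂P, Tendsto (fun n : ℕ => (∑ i ∈ Finset.range n, φ (ξ i ω)) / (n : ℝ))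
      atTop (nhds (∫ ω, φ (ξ 0 ω) ∂P)) := by
  set c : ℕ → ℝ := fun k => 1 + 1 / ((k : ℝ) + 1) with hc
  have hc1 : ∀ k, 1 < c k := fun k => by
    have : 0 < 1 / ((k : ℝ) + 1) := by positivity
    simp only [hc]; linarith
  have hc2 : ∀ k, c k ≤ 2 := fun k => by
    have : 1 / ((k : ℝ) + 1) ≤ 1 := by
      rw [div_le_one (by positivity)]
      have : (0 : ℝ) ≤ k := Nat.cast_nonneg k
      linarith
    simp only [hc]; linarith
  have hclim : Tendsto c atTop (nhds 1) := by
    have h := (tendsto_one_div_add_atTop_nhds_zero_nat (𝕜 := ℝ)).const_add 1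
    rw [add_zero] at h
    exact h
  have hall := ae_all_iff.2 fun k =>
    subseq_tendsto P hmeas hident hint hH hφ hφ0 hφ1 (hc1 k) (hc2 k)
  filter_upwards [hall] with ω hω
  refine tendsto_div_of_monotone_of_tendsto_div_floor_pow
    (fun n => ∑ i ∈ Finset.range n, φ (ξ i ω)) _ ?_ c hc1 hclim hω
  intro a b hab
  exact Finset.sum_le_sum_of_subset_of_nonneg (Finset.range_mono hab) fun i _ _ => hφ0 _

/-- **Rio's strong law of large numbers for α-mixing sequences** (Theorem 6 of the paper):
if `(ξ i)` is identically distributed, integrable and α-mixing with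
`∫_0^1 log(1 + α^→(y/2)) Ḡ^→(y) dy < ∞`, where `G` is the df of `|ξ 1|`, then
`(1/n) ∑_{i=1}^n (ξ_i - E[ξ_i]) → 0` almost surely. -/
theorem rio_slln_alpha_mixing
    {Ω : Type*} [MeasurableSpace Ω] (P : Measure Ω) [IsProbabilityMeasure P]
    (ξ : ℕ → Ω → ℝ) (hmeas : ∀ i, Measurable (ξ i))
    (hident : ∀ i, Measure.map (ξ i) P = Measure.map (ξ 0) P)
    (hint : Integrable (ξ 0) P)
    (hmix : Tendsto (alphaCoef P ξ) atTop (nhds 0))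
    (hcond : IntegrableOn
      (fun y => Real.log (1 + rcInv (alphaExt (alphaCoef P ξ)) (y / 2)) *
        rcInv (fun x => 1 - distFun P (fun ω => |ξ 0 ω|) x) y)
      (Set.Ioo (0 : ℝ) 1)) :
    ∀ᵐ ω ∂P, Tendsto
      (fun n : ℕ => (1 / (n : ℝ)) * ∑ i ∈ Finset.range n, (ξ i ω - ∫ ω', ξ i ω' ∂P))
      atTop (nhds 0) := by
  have hH := cond_conv P (hmeas 0).abs hint.abs (fun ω => abs_nonneg _) hmix hcond
  have h1 := slln_nonneg P hmeas hident hint hH (φ := fun x => max x 0)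
    (measurable_id.max measurable_const) (fun x => le_max_right _ _)
    (fun x => max_le (le_abs_self x) (abs_nonneg x))
  have h2 := slln_nonneg P hmeas hident hint hH (φ := fun x => max (-x) 0)
    (measurable_neg.max measurable_const) (fun x => le_max_right _ _)
    (fun x => max_le (neg_le_abs x) (abs_nonneg x))
  have hmx : ∀ x : ℝ, max x 0 - max (-x) 0 = x := fun x => by
    rcases le_total 0 x with h | h
    · rw [max_eq_left h, max_eq_right (by linarith)]; ring
    · rw [max_eq_right h, max_eq_left (by linarith)]; ring
  have hE : ∫ ω, max (ξ 0 ω) 0 ∂P - ∫ ω, max (-ξ 0 ω) 0 ∂P = ∫ ω, ξ 0 ω ∂P := by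
    rw [← integral_sub hint.pos_part hint.neg_part]
    exact integral_congr_ae (ae_of_all _ fun ω => hmx _)
  have hEi : ∀ i, ∫ ω, ξ i ω ∂P = ∫ ω, ξ 0 ω ∂P := fun i =>
    ident_integral P hmeas hident measurable_id i
  filter_upwards [h1, h2] with ω a b
  have h3 := (a.sub b).sub_const (∫ ω, ξ 0 ω ∂P)
  rw [hE, sub_self] at h3
  refine h3.congr' ?_
  filter_upwards [eventually_gt_atTop 0] with n hn
  have hn' : (n : ℝ) ≠ 0 := by positivity
  simp_rw [hEi]
  rw [← sub_div, ← Finset.sum_sub_distrib]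
  simp_rw [hmx]
  rw [Finset.sum_sub_distrib, Finset.sum_const, Finset.card_range, nsmul_eq_mul]
  field_simp
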